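/- arXiv:2605.24240 — 2 statements merged into one kernel-verified Lean document; each statement's English description precedes it below -/
import Mathlib

section
/- Let E be a regular category with limits of shape J, where J is a small category, let d : J ⥤ E be a diagram, and let Im(d) be its image diagram together with the natural monomorphism i : Im(d) ↪ d. Then the morphism lim Im(d) → lim d induced by i on limits is an isomorphism; in particular lim Im(d) ≅ lim d. -/
open CategoryTheory CategoryTheory.Limits

universe w v u

variable {E : Type u} [Category.{v} E] {J : Type w} [SmallCategory J]

section ImageDiagram

variable [HasStrongEpiMonoFactorisations E] [HasLimitsOfShape J E]

/-- The image diagram `Im(d)` of a diagram `d : J ⥤ E`: it sends each object `j` to the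
image `im(λ_j)` of the limit cone leg `λ_j : lim d ⟶ d(j)`, with action on morphisms induced
by the functoriality of image factorizations applied to the naturality triangles of the
limit cone. -/
noncomputable def imageDiagram (d : J ⥤ E) : J ⥤ E where
  obj j := image (limit.π d j)
  map {j j'} f := image.map (Arrow.homMk' _ _
    (show 𝟙 (limit d) ≫ limit.π d j' = limit.π d j ≫ d.map f by simp))
  map_id j := by
    apply (cancel_mono (image.ι (limit.π d j))).mp
    simp [image.map_homMk'_ι]
  map_comp {j j' j''} f g := by
    apply (cancel_mono (image.ι (limit.π d j''))).mp
    simp only [Category.assoc, image.map_homMk'_ι]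
    rw [← Category.assoc, image.map_homMk'_ι]
    simp

/-- The natural monomorphism `i : Im(d) ↪ d`, whose components are the mono parts
`im(λ_j) ↪ d(j)` of the image factorizations of the limit cone legs. -/
noncomputable def imageDiagramInclusion (d : J ⥤ E) : imageDiagram d ⟶ d where
  app j := image.ι (limit.π d j)
  naturality j j' f := by
    simp [imageDiagram, image.map_homMk'_ι]

end ImageDiagram

section MonoPostcompose

variable {K C : Type*} [Category* K] [Category* C] {F G : K ⥤ C}

/-- Postcomposition with a monomorphism of diagrams reflects limit cones: since `α` is monic, a
factorization through `c` of cones over `G` is already one of cones over `F`. -/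
def isLimitOfIsLimitPostcompose (α : F ⟶ G) [Mono α] {c : Cone F}
    (hc : IsLimit ((Cone.postcompose α).obj c)) : IsLimit c where
  lift s := hc.lift ((Cone.postcompose α).obj s)
  fac s := by
    have lift_comp_π :
        (Functor.const K).map (hc.lift ((Cone.postcompose α).obj s)) ≫ c.π = s.π := by
      rw [← cancel_mono α]
      ext k
      simpa using hc.fac ((Cone.postcompose α).obj s) k
    exact NatTrans.congr_app lift_comp_π
  uniq s m hm := hc.uniq ((Cone.postcompose α).obj s) m fun k ↦ by simp [← hm k]

theorem isIso_limMap_of_isLimit_postcompose [HasLimit F] [HasLimit G] (α : F ⟶ G) [Mono α]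
    {c : Cone F} (hc : IsLimit ((Cone.postcompose α).obj c)) : IsIso (limMap α) := by
  let e : limit F ≅ limit G :=
    (limit.isLimit F).conePointUniqueUpToIso (isLimitOfIsLimitPostcompose α hc) ≪≫
      hc.conePointUniqueUpToIso (limit.isLimit G)
  have limMap_eq : limMap α = e.hom := limit.hom_ext fun k ↦ by simp [e]
  rw [limMap_eq]
  infer_instance

end MonoPostcompose

section ImageCone

variable [HasStrongEpiMonoFactorisations E] [HasLimitsOfShape J E] (d : J ⥤ E)

instance mono_imageDiagramInclusion : Mono (imageDiagramInclusion d) :=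
  have (j : J) : Mono ((imageDiagramInclusion d).app j) :=
    inferInstanceAs (Mono (image.ι (limit.π d j)))
  NatTrans.mono_of_mono_app _

/-- The cone over `Im(d)` with apex `lim d`, whose legs are the strong epi parts
`lim d ↠ im(λ_j)` of the image factorizations of the limit cone legs. -/
noncomputable def imageCone : Cone (imageDiagram d) where
  pt := limit d
  π :=
    { app j := factorThruImage (limit.π d j)
      naturality _ _ f := (image.factor_map (Arrow.homMk' (𝟙 (limit d)) (d.map f) _)).symm }

/-- The factorization of the limit cone `λ` of `d` through `i : Im(d) ↪ d`. -/
noncomputable def imageConePostcomposeIso :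
    (Cone.postcompose (imageDiagramInclusion d)).obj (imageCone d) ≅ limit.cone d :=
  Cone.ext (Iso.refl _) fun j ↦ (image.fac (limit.π d j)).trans (Category.id_comp _).symm

theorem stmt_2_general : IsIso (limMap (imageDiagramInclusion d)) :=
  isIso_limMap_of_isLimit_postcompose _
    ((limit.isLimit d).ofIsoLimit (imageConePostcomposeIso d).symm)

end ImageCone

/-- Let `E` be a regular category (finitely complete, with coequalizers of
kernel pairs, regular epimorphisms stable under pullback, hence with strong epi–mono
factorizations) with limits of shape `J`, let `d : J ⥤ E` be a diagram, and let `Im(d)` be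
its image diagram with natural monomorphism `i : Im(d) ↪ d`. Then the morphism
`lim Im(d) ⟶ lim d` induced by `i` is an isomorphism; in particular `lim Im(d) ≅ lim d`. -/
theorem stmt_2
    [HasFiniteLimits E]
    (hKernelPairCoeq : ∀ {X Y : E} (f : X ⟶ Y),
      HasCoequalizer (pullback.fst f f) (pullback.snd f f))
    (hRegEpiStable : ∀ {X Y Z : E} (f : X ⟶ Z) (g : Y ⟶ Z),
      RegularEpi g → Nonempty (RegularEpi (pullback.fst f g)))
    [HasStrongEpiMonoFactorisations E]
    [HasLimitsOfShape J E]
    (d : J ⥤ E) :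
    IsIso (limMap (imageDiagramInclusion d)) ∧
      Nonempty (limit (imageDiagram d) ≅ limit d) := by
  have := stmt_2_general d
  exact ⟨this, ⟨asIso (limMap (imageDiagramInclusion d))⟩⟩
end

section
/- Let F be a finite forest (a finite simple graph with no cycles) and let d : ∫F^op → FinSet be a structured co-decomposition. Then lim d is empty if and only if there exists a connected component T of F and a vertex t of T such that the set-theoretic image of the limit projection lim(d|_{∫T^op}) → d(t) is empty; moreover, for a fixed component T, if this image is empty for one vertex of T then it is empty for every vertex of T. -/
open CategoryTheory CategoryTheory.Limits Opposite

variable {V : Type}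

/-- Objects of the barycentric subdivision `∫G` of a simple graph `G`:
vertices and edges of `G`. -/
def BarySub (G : SimpleGraph V) : Type := V ⊕ G.edgeSet

/-- The preorder on `∫G`: besides reflexivity, `e ≤ x` precisely when the
edge `e` is incident with the vertex `x`. -/
instance BarySub.instPreorder (G : SimpleGraph V) : Preorder (BarySub G) where
  le a b := a = b ∨ ∃ (e : G.edgeSet) (x : V), a = Sum.inr e ∧ b = Sum.inl x ∧ x ∈ (e : Sym2 V)
  le_refl a := Or.inl rfl
  le_trans a b c h₁ h₂ := by
    rcases h₁ with rfl | ⟨e, x, rfl, rfl, hx⟩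
    · exact h₂
    · rcases h₂ with rfl | ⟨e', x', h, _, _⟩
      · exact Or.inr ⟨e, x, rfl, rfl, hx⟩
      · simp at h

/-- The object of `(∫G)ᵒᵖ` corresponding to a vertex `t` of `G`. -/
def vtx (G : SimpleGraph V) (t : V) : (BarySub G)ᵒᵖ := op (Sum.inl t)

/-- The object of `(∫G)ᵒᵖ` corresponding to an edge `e` of `G`. -/
def edg (G : SimpleGraph V) (e : G.edgeSet) : (BarySub G)ᵒᵖ := op (Sum.inr e)

/-- The morphism `x → e` of `(∫G)ᵒᵖ` for `x` a vertex incident with the edge `e`. -/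
def inc (G : SimpleGraph V) (e : G.edgeSet) (t : V) (ht : t ∈ (e : Sym2 V)) :
    vtx G t ⟶ edg G e :=
  (homOfLE (Or.inr ⟨e, t, rfl, rfl, ht⟩)).op

/-- Any two parallel morphisms in `(∫G)ᵒᵖ` agree (it is a poset). -/
lemma baryHom_ext {G : SimpleGraph V} {U W : (BarySub G)ᵒᵖ} (i j : U ⟶ W) : i = j :=
  Quiver.Hom.unop_inj (Subsingleton.elim _ _)

/-- The only morphisms of `(∫G)ᵒᵖ` into a vertex object are identities. -/
lemma eq_vtx_of_hom {G : SimpleGraph V} {U : (BarySub G)ᵒᵖ} {t : V} (i : U ⟶ vtx G t) :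
    U = vtx G t := by
  have h := (Quiver.Hom.unop i).le
  rcases h with h | ⟨e, x, h, _, _⟩
  · exact unop_injective h.symm
  · simp [vtx] at h

/-- A global matching family for `d : (∫G)ᵒᵖ ⥤ Type`: a choice of `a t ∈ d t` for every
vertex `t` such that for every edge `e = xy` we have `d(e_x)(a x) = d(e_y)(a y)`. -/
def IsMatchingFamily (G : SimpleGraph V) (d : (BarySub G)ᵒᵖ ⥤ Type)
    (a : ∀ t : V, d.obj (vtx G t)) : Prop :=
  ∀ (e : G.edgeSet) (x : V) (hx : x ∈ (e : Sym2 V)) (y : V) (hy : y ∈ (e : Sym2 V)),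
    d.map (inc G e x hx) (a x) = d.map (inc G e y hy) (a y)
/-- The map `∫H → ∫G` induced by a graph homomorphism `f : H →g G`. -/
def mapBary {W : Type} {H : SimpleGraph W} {G : SimpleGraph V} (f : H →g G) :
    BarySub H → BarySub G
  | .inl v => .inl (f v)
  | .inr e => .inr (f.mapEdgeSet e)

lemma mapBary_monotone {W : Type} {H : SimpleGraph W} {G : SimpleGraph V} (f : H →g G) :
    Monotone (mapBary f) := by
  rintro a b (rfl | ⟨e, t, rfl, rfl, ht⟩)
  · exact le_refl _
  · exact Or.inr ⟨f.mapEdgeSet e, f t, rfl, rfl, Sym2.mem_map.mpr ⟨t, ht, rfl⟩⟩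

/-- The restriction of a structured co-decomposition `d : (∫G)ᵒᵖ ⥤ Type` along a graph
homomorphism `f : H →g G`, i.e. the composite of `d` with the functor `(∫H)ᵒᵖ → (∫G)ᵒᵖ`. -/
def restrictBary {W : Type} {H : SimpleGraph W} {G : SimpleGraph V} (f : H →g G)
    (d : (BarySub G)ᵒᵖ ⥤ Type) : (BarySub H)ᵒᵖ ⥤ Type :=
  (mapBary_monotone f).functor.op ⋙ d
/-- The subgraph of `G` induced by a connected component `c`. -/
def compSubgraph (G : SimpleGraph V) (c : G.ConnectedComponent) : G.Subgraph where
  verts := c.supp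
  Adj u w := G.Adj u w ∧ u ∈ c.supp ∧ w ∈ c.supp
  adj_sub h := h.1
  edge_vert h := h.2.1
  symm := ⟨fun _ _ h => ⟨h.1.symm, h.2.2, h.2.1⟩⟩

/-- The set-theoretic image of the limit projection `lim d → d(z)`:
the value of the image diagram of `d` at `z`. -/
noncomputable def imSet (G : SimpleGraph V) (d : (BarySub G)ᵒᵖ ⥤ Type)
    (z : (BarySub G)ᵒᵖ) : Set (d.obj z) :=
  Set.range (limit.π d z)

/-! A matching family only compares values at adjacent vertices, so families on the connected
components glue without any compatibility condition: `lim d` is the product of the limits of the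
restrictions of `d` to the components. By the axiom of choice, a product is empty exactly when one
of its factors is, and the image of a limit projection is empty exactly when the limit is. -/

section MatchingFamilies

variable {G : SimpleGraph V} {d : (BarySub G)ᵒᵖ ⥤ Type} {a : ∀ t : V, d.obj (vtx G t)}

lemma isMatchingFamily_iff_forall_adj :
    IsMatchingFamily G d a ↔ ∀ (x y : V) (h : G.Adj x y),
      d.map (inc G ⟨s(x, y), h⟩ x (Sym2.mem_mk_left x y)) (a x) =
        d.map (inc G ⟨s(x, y), h⟩ y (Sym2.mem_mk_right x y)) (a y) := by
  refine ⟨fun ha x y h => ha ⟨s(x, y), h⟩ x _ y _, fun ha ⟨e, he⟩ x hx y hy => ?_⟩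
  obtain rfl | hxy := eq_or_ne x y
  · rfl
  · obtain rfl : e = s(x, y) := (Sym2.mem_and_mem_iff hxy).mp ⟨hx, hy⟩
    exact ha x y he

lemma isMatchingFamily_of_mem_sections {s : ∀ z, d.obj z} (hs : s ∈ d.sections) :
    IsMatchingFamily G d fun t => s (vtx G t) :=
  fun e x hx y hy => (hs (inc G e x hx)).trans (hs (inc G e y hy)).symm

/-- The extension of a family of vertex values to all objects of `(∫G)ᵒᵖ`. The value at an edge is
transported from an arbitrarily chosen endpoint; for a matching family the choice is immaterial. -/
noncomputable def extendToEdges (a : ∀ t : V, d.obj (vtx G t)) : ∀ z, d.obj z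
  | ⟨.inl t⟩ => a t
  | ⟨.inr e⟩ => d.map (inc G e (e : Sym2 V).out.1 (Sym2.out_fst_mem _)) (a _)

lemma IsMatchingFamily.extendToEdges_mem_sections (ha : IsMatchingFamily G d a) :
    extendToEdges a ∈ d.sections := by
  rintro ⟨z⟩ ⟨w⟩ i
  obtain rfl | ⟨e, x, rfl, rfl, hx⟩ := i.unop.le
  · rw [baryHom_ext i (𝟙 _), d.map_id]
    rfl
  · rw [baryHom_ext i (inc G e x hx)]
    exact ha e x hx _ _

lemma extendToEdges_restrict_of_mem_sections {s : ∀ z, d.obj z} (hs : s ∈ d.sections) :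
    extendToEdges (fun t => s (vtx G t)) = s := by
  funext ⟨z⟩
  cases z with
  | inl t => rfl
  | inr e => exact hs (inc G e _ _)

variable (d) in
/-- The elements of `lim d` are the global matching families for `d`. -/
noncomputable def limitEquivMatchingFamily : limit d ≃ {a // IsMatchingFamily G d a} :=
  (Types.limitEquivSections d).trans
    { toFun s := ⟨fun t => s.1 (vtx G t), isMatchingFamily_of_mem_sections s.2⟩
      invFun a := ⟨extendToEdges a.1, a.2.extendToEdges_mem_sections⟩
      left_inv s := Subtype.ext (extendToEdges_restrict_of_mem_sections s.2)
      right_inv _ := rfl }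

lemma IsMatchingFamily.restrict {W : Type} {H : SimpleGraph W} (ha : IsMatchingFamily G d a)
    (f : H →g G) : IsMatchingFamily H (restrictBary f d) fun w => a (f w) :=
  fun e x hx y hy => ha (f.mapEdgeSet e) (f x) (Sym2.mem_map.mpr ⟨x, hx, rfl⟩)
    (f y) (Sym2.mem_map.mpr ⟨y, hy, rfl⟩)

end MatchingFamilies

section Components

variable {G : SimpleGraph V} (d : (BarySub G)ᵒᵖ ⥤ Type)

/-- The restriction of `d` to the connected component `c`, written `d|_{∫Tᵒᵖ}` on paper. -/
abbrev restrictComponent (c : G.ConnectedComponent) : (BarySub (compSubgraph G c).coe)ᵒᵖ ⥤ Type :=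
  restrictBary (compSubgraph G c).hom d

variable {d}

/-- The family of vertex values on `G` that agrees with the given family on each component. -/
def glueComponents (a : ∀ c w, (restrictComponent d c).obj (vtx (compSubgraph G c).coe w)) (t : V) :
    d.obj (vtx G t) :=
  a (G.connectedComponentMk t) ⟨t, rfl⟩

lemma glueComponents_of_mem_supp
    (a : ∀ c w, (restrictComponent d c).obj (vtx (compSubgraph G c).coe w))
    {c : G.ConnectedComponent} {t : V} (ht : t ∈ c.supp) : glueComponents a t = a c ⟨t, ht⟩ := by
  obtain rfl : G.connectedComponentMk t = c := ht
  rfl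

lemma isMatchingFamily_glueComponents
    {a : ∀ c w, (restrictComponent d c).obj (vtx (compSubgraph G c).coe w)}
    (ha : ∀ c, IsMatchingFamily (compSubgraph G c).coe (restrictComponent d c) (a c)) :
    IsMatchingFamily G d (glueComponents a) := by
  refine isMatchingFamily_iff_forall_adj.mpr fun x y hxy => ?_
  let c := G.connectedComponentMk x
  have hx : x ∈ c.supp := rfl
  have hy : y ∈ c.supp := SimpleGraph.ConnectedComponent.sound hxy.symm.reachable
  rw [glueComponents_of_mem_supp a hx, glueComponents_of_mem_supp a hy]
  exact isMatchingFamily_iff_forall_adj.mp (ha c) ⟨x, hx⟩ ⟨y, hy⟩ ⟨hxy, hx, hy⟩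

variable (d)

/-- Matching families on `G` are tuples of matching families, one on each component. -/
def matchingFamilyEquivPi : {a // IsMatchingFamily G d a} ≃
    ∀ c, {a // IsMatchingFamily (compSubgraph G c).coe (restrictComponent d c) a} where
  toFun a c := ⟨fun w => a.1 w, a.2.restrict (compSubgraph G c).hom⟩
  invFun a := ⟨glueComponents fun c => (a c).1, isMatchingFamily_glueComponents fun c => (a c).2⟩
  left_inv _ := rfl
  right_inv a := by
    funext c
    ext w
    exact glueComponents_of_mem_supp (fun c => (a c).1) w.2

/-- The limit of `d` is the product of the limits of its restrictions to the components. -/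
noncomputable def limitEquivPiLimit : limit d ≃ ∀ c, limit (restrictComponent d c) :=
  (limitEquivMatchingFamily d).trans <| (matchingFamilyEquivPi d).trans <|
    Equiv.piCongrRight fun c => (limitEquivMatchingFamily (restrictComponent d c)).symm

lemma isEmpty_limit_iff_exists_component :
    IsEmpty (limit d) ↔ ∃ c, IsEmpty (limit (restrictComponent d c)) :=
  (limitEquivPiLimit d).isEmpty_congr.trans isEmpty_pi

lemma imSet_eq_empty_iff (z : (BarySub G)ᵒᵖ) : imSet G d z = ∅ ↔ IsEmpty (limit d) :=
  Set.range_eq_empty_iff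

end Components

theorem stmt_12_general {V : Type} (G : SimpleGraph V) (d : (BarySub G)ᵒᵖ ⥤ Type) :
    (IsEmpty (limit d) ↔
      ∃ (c : G.ConnectedComponent) (t : V) (ht : t ∈ c.supp),
        imSet (compSubgraph G c).coe (restrictBary (compSubgraph G c).hom d)
          (vtx (compSubgraph G c).coe ⟨t, ht⟩) = ∅) ∧
    (∀ (c : G.ConnectedComponent) (t t' : V) (ht : t ∈ c.supp) (ht' : t' ∈ c.supp),
      imSet (compSubgraph G c).coe (restrictBary (compSubgraph G c).hom d)
          (vtx (compSubgraph G c).coe ⟨t, ht⟩) = ∅ →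
      imSet (compSubgraph G c).coe (restrictBary (compSubgraph G c).hom d)
          (vtx (compSubgraph G c).coe ⟨t', ht'⟩) = ∅) := by
  simp only [imSet_eq_empty_iff]
  refine ⟨(isEmpty_limit_iff_exists_component d).trans (exists_congr fun c => ?_),
    fun _ _ _ _ _ h => h⟩
  obtain ⟨t, ht⟩ := c.nonempty_supp
  exact ⟨fun h => ⟨t, ht, h⟩, fun ⟨_, _, h⟩ => h⟩

/-- For a forest-shaped structured co-decomposition `d`, `lim d` is empty
iff for some connected component `T` and some vertex `t` of `T` the image of the limit
projection `lim (d|_{∫Tᵒᵖ}) → d(t)` is empty; moreover, for a fixed component, if this image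
is empty for one vertex then it is empty for every vertex. -/
theorem stmt_12 {V : Type} [Fintype V] (G : SimpleGraph V) (hG : G.IsAcyclic)
    (d : (BarySub G)ᵒᵖ ⥤ Type) [∀ z, Finite (d.obj z)] :
    (IsEmpty (limit d) ↔
      ∃ (c : G.ConnectedComponent) (t : V) (ht : t ∈ c.supp),
        imSet (compSubgraph G c).coe (restrictBary (compSubgraph G c).hom d)
          (vtx (compSubgraph G c).coe ⟨t, ht⟩) = ∅) ∧
    (∀ (c : G.ConnectedComponent) (t t' : V) (ht : t ∈ c.supp) (ht' : t' ∈ c.supp),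
      imSet (compSubgraph G c).coe (restrictBary (compSubgraph G c).hom d)
          (vtx (compSubgraph G c).coe ⟨t, ht⟩) = ∅ →
      imSet (compSubgraph G c).coe (restrictBary (compSubgraph G c).hom d)
          (vtx (compSubgraph G c).coe ⟨t', ht'⟩) = ∅) :=
  stmt_12_general G d
end
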